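/- arXiv:1303.5509 — 3 statements merged into one kernel-verified Lean document; each statement's English description precedes it below -/
import Mathlib

section
/- Let q be a prime power, let π be an order-q-subplane of PG(2,q³) tangent to ℓ∞ at the point T, with tangent splash S_T, and let P be a point of π not on ℓ∞. Then the set t_P = { ℓ̄ ∩ ℓ∞ : ℓ a line of π through P, where ℓ̄ is the line of PG(2,q³) extending ℓ } is an order-q-subline of ℓ∞ that contains T and is contained in S_T. -/
/-!
The trace `t_P` depends only on which lines of `PG(2, K)` through the affine point `P` are secant to
the subplane `π`. An elation with centre `P` fixes every line through `P`, so the image `π'` of `π`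
has the same secants through `P`; for a suitable elation, `ℓ∞` is itself a secant of `π'`. As any
two secants of a subplane meet in a point of that subplane, the secants of `π'` through `P` meet
`ℓ∞` exactly in the points of `π' ∩ ℓ∞`. Hence `t_P = π' ∩ ℓ∞` is a subline.
-/

namespace TangentSplashPaper

open Projectivization

/-- The point set of the projective plane `PG(2,K)`. -/
abbrev PGPoint (K : Type*) [Field K] := Projectivization K (Fin 3 → K)

/-- `ℓ` is a line of `PG(2,K)`: the set of points lying in a fixed
2-dimensional linear subspace. -/
def IsLine {K : Type*} [Field K] (ℓ : Set (PGPoint K)) : Prop :=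
  ∃ W : Submodule K (Fin 3 → K), Module.finrank K W = 2 ∧
    ℓ = {P : PGPoint K | P.submodule ≤ W}

/-- The distinguished line `ℓ∞` of `PG(2,K)`: points whose last homogeneous
coordinate vanishes. -/
def linf (K : Type*) [Field K] : Set (PGPoint K) := {P : PGPoint K | P.rep 2 = 0}

/-- The homography of `PG(2,K)` induced by a linear automorphism of `K³`;
as maps of point sets, these are exactly the elements of `PGL(3,K)`. -/
def hmap {K : Type*} [Field K] (f : (Fin 3 → K) ≃ₗ[K] (Fin 3 → K)) :
    PGPoint K → PGPoint K :=
  Projectivization.map f.toLinearMap f.injective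

/-- The base subplane `PG(2,F)`: points admitting homogeneous coordinates in
the subfield `F`. -/
def basePlane (F K : Type*) [Field F] [Field K] [Algebra F K] : Set (PGPoint K) :=
  {P : PGPoint K | ∃ v : Fin 3 → K, ∃ hv : v ≠ 0, P = Projectivization.mk K v hv ∧
    ∀ i, v i ∈ (algebraMap F K).range}

/-- An order-`q`-subplane of `PG(2,K)` (`q = |F|`): an image of `PG(2,F)`
under a homography. -/
def IsSubplane (F : Type*) {K : Type*} [Field F] [Field K] [Algebra F K]
    (S : Set (PGPoint K)) : Prop :=
  ∃ f : (Fin 3 → K) ≃ₗ[K] (Fin 3 → K), S = hmap f '' basePlane F K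

/-- An order-`q`-subline of `PG(2,K)`: the intersection of an order-`q`-subplane
with a line of `PG(2,K)` meeting it in `q+1` points. -/
def IsSubline (F : Type*) {K : Type*} [Field F] [Field K] [Algebra F K] (q : ℕ)
    (b : Set (PGPoint K)) : Prop :=
  ∃ S ℓ : Set (PGPoint K), IsSubplane F S ∧ IsLine ℓ ∧
    (S ∩ ℓ).ncard = q + 1 ∧ b = S ∩ ℓ

/-- The splash of a subplane `π` on `ℓ∞`: all points of `ℓ∞` lying on a line
of `PG(2,K)` spanned by two points of `π`. -/
def splash {K : Type*} [Field K] (π : Set (PGPoint K)) : Set (PGPoint K) :=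
  {X : PGPoint K | X ∈ linf K ∧ ∃ P Q : PGPoint K, P ∈ π ∧ Q ∈ π ∧ P ≠ Q ∧
    ∃ ℓ : Set (PGPoint K), IsLine ℓ ∧ P ∈ ℓ ∧ Q ∈ ℓ ∧ X ∈ ℓ}

/-- `S` is a tangent splash of `ℓ∞` with centre `T`: `S` is the splash of some
order-`q`-subplane meeting `ℓ∞` exactly in the point `T`. -/
def IsTangentSplash (F : Type*) {K : Type*} [Field F] [Field K] [Algebra F K]
    (S : Set (PGPoint K)) (T : PGPoint K) : Prop :=
  ∃ π : Set (PGPoint K), IsSubplane F π ∧ π ∩ linf K = {T} ∧ S = splash π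

/-- The set `t_P`: points of `ℓ∞` lying on the extension of a line of the
subplane `π` through the point `P` (lines of `π` are the lines of `PG(2,K)`
meeting `π` in `q+1` points). -/
def pencilTrace {K : Type*} [Field K] (q : ℕ) (π : Set (PGPoint K))
    (P : PGPoint K) : Set (PGPoint K) :=
  {X : PGPoint K | X ∈ linf K ∧ ∃ ℓ : Set (PGPoint K), IsLine ℓ ∧ P ∈ ℓ ∧
    (π ∩ ℓ).ncard = q + 1 ∧ X ∈ ℓ}

open Module
open scoped LinearAlgebra.Projectivization

section ProjectiveSpace

variable {K V : Type*} [Field K] [AddCommGroup V] [Module K V]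

lemma two_le_finrank_of_projectivization_nontrivial [FiniteDimensional K V] {W : Submodule K V}
    (hW : (W.projectivization : Set (ℙ K V)).Nontrivial) : 2 ≤ finrank K W := by
  obtain ⟨P, hP, Q, hQ, hPQ⟩ := hW
  have hspan : Submodule.span K (Set.range ![P.rep, Q.rep]) ≤ W := by
    rw [SetLike.mem_coe, ← mk_rep P] at hP
    rw [SetLike.mem_coe, ← mk_rep Q] at hQ
    rw [Submodule.span_le]
    rintro _ ⟨i, rfl⟩
    fin_cases i
    exacts [hP, hQ]
  calc 2 = finrank K (Submodule.span K (Set.range ![P.rep, Q.rep])) := by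
        simp [finrank_span_eq_card (linearIndependent_pair_iff_ne.2 hPQ)]
    _ ≤ finrank K W := Submodule.finrank_mono hspan

lemma ncard_projectivization (W : Submodule K V) :
    (W.projectivization : Set (ℙ K V)).ncard = Nat.card (ℙ K W) := by
  have hrange : (W.projectivization : Set (ℙ K V)) =
      Set.range (Projectivization.map W.subtype W.injective_subtype) := by
    ext X
    induction X using Projectivization.ind with | h v hv
    constructor
    · intro hX
      exact ⟨.mk K ⟨v, hX⟩ fun h => hv (congrArg Subtype.val h), rfl⟩
    · rintro ⟨Y, hY⟩
      induction Y using Projectivization.ind with | h w hw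
      rw [← hY]
      exact w.2
  rw [hrange, ← Set.image_univ,
    Set.ncard_image_of_injective _ (Projectivization.map_injective _ W.injective_subtype),
    Set.ncard_univ]

lemma exists_dual_ker_eq [FiniteDimensional K V] {W : Submodule K V}
    (hW : finrank K W + 1 = finrank K V) {v : V} (hv : v ∉ W) :
    ∃ h : Dual K V, h v ≠ 0 ∧ LinearMap.ker h = W := by
  obtain ⟨h, hhv, hmap⟩ := Submodule.exists_dual_map_eq_bot_of_notMem hv inferInstance
  have hh : h ≠ 0 := by
    rintro rfl
    exact hhv rfl
  have hker := Dual.finrank_ker_add_one_of_ne_zero hh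
  refine ⟨h, hhv, (Submodule.eq_of_le_of_finrank_eq ?_ (by lia)).symm⟩
  exact LinearMap.le_ker_iff_map.2 hmap

end ProjectiveSpace

section Line

variable {K : Type*} [Field K]

lemma isLine_iff {ℓ : Set (PGPoint K)} :
    IsLine ℓ ↔ ∃ W : Submodule K (Fin 3 → K), finrank K W = 2 ∧ ℓ = W.projectivization := by
  simp only [IsLine, Set.ext_iff, Set.mem_ofPred_eq, SetLike.mem_coe,
    Submodule.mem_projectivization_iff_submodule_le]

lemma exists_isLine_of_ne {P Q : PGPoint K} (hPQ : P ≠ Q) : ∃ ℓ, IsLine ℓ ∧ P ∈ ℓ ∧ Q ∈ ℓ := by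
  obtain ⟨M, -, hM, hsub⟩ := isCollinear_pair P Q
  obtain ⟨W, rfl⟩ := Submodule.projectivization.surjective M
  rw [Subspace.submodule.apply_symm_apply] at hM
  have hP := hsub (Set.mem_insert P {Q})
  have hQ := hsub (Set.mem_insert_of_mem P rfl)
  have hW := two_le_finrank_of_projectivization_nontrivial ⟨P, hP, Q, hQ, hPQ⟩
  exact ⟨_, isLine_iff.2 ⟨W, hM.antisymm hW, rfl⟩, hP, hQ⟩

lemma IsLine.inter_subsingleton {ℓ m : Set (PGPoint K)} (hℓ : IsLine ℓ) (hm : IsLine m)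
    (hne : ℓ ≠ m) : (ℓ ∩ m).Subsingleton := by
  obtain ⟨W, hW, rfl⟩ := isLine_iff.1 hℓ
  obtain ⟨U, hU, rfl⟩ := isLine_iff.1 hm
  intro P hP Q hQ
  by_contra hPQ
  exact hne (by rw [line_unique hPQ W U hW hU hP.1 hQ.1 hP.2 hQ.2])

lemma linf_eq_projectivization :
    linf K = (LinearMap.ker (LinearMap.proj 2 : (Fin 3 → K) →ₗ[K] K)).projectivization := by
  ext X
  conv_rhs => rw [← X.mk_rep]
  rfl

lemma isLine_linf : IsLine (linf K) := by
  refine isLine_iff.2 ⟨_, ?_, linf_eq_projectivization⟩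
  have hproj : (LinearMap.proj 2 : Dual K (Fin 3 → K)) ≠ 0 := fun h => by
    simpa using LinearMap.congr_fun h (Pi.single 2 1)
  simpa using Dual.finrank_ker_add_one_of_ne_zero hproj

end Line

section Subgeometry

variable (F : Type*) {K V ι : Type*} [Field F] [Field K] [Algebra F K] [AddCommGroup V] [Module K V]

/-- The embedding of `F^ι` into `V` whose image is the `F`-span of the basis of `V` given by `f`. -/
def subfieldMap (f : (ι → K) ≃ₗ[K] V) : (ι → F) →ₛₗ[algebraMap F K] V where
  toFun x := f (algebraMap F K ∘ x)
  map_add' x y := by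
    rw [← map_add]
    exact congrArg f (funext fun i => map_add _ (x i) (y i))
  map_smul' a x := by
    rw [← map_smul]
    exact congrArg f (funext fun i => map_mul _ a (x i))

lemma subfieldMap_apply (f : (ι → K) ≃ₗ[K] V) (x : ι → F) :
    subfieldMap F f x = f (algebraMap F K ∘ x) := rfl

lemma subfieldMap_injective (f : (ι → K) ≃ₗ[K] V) : Function.Injective (subfieldMap F f) :=
  f.injective.comp (algebraMap F K).injective.comp_left

/-- The embedding of `PG(F^ι)` into `PG(V)` as the subgeometry spanned over `F` by the basis of `V`
given by `f`. -/
def subgeometryMap (f : (ι → K) ≃ₗ[K] V) : ℙ F (ι → F) → ℙ K V :=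
  Projectivization.map (subfieldMap F f) (subfieldMap_injective F f)

lemma subgeometryMap_injective (f : (ι → K) ≃ₗ[K] V) : Function.Injective (subgeometryMap F f) := by
  intro X Y h
  induction X using Projectivization.ind with | h x hx
  induction Y using Projectivization.ind with | h y hy
  simp only [subgeometryMap, map_mk, mk_eq_mk_iff', subfieldMap_apply, ← map_smul,
    f.injective.eq_iff] at h
  obtain ⟨a, ha⟩ := h
  have hcoord (i : ι) : a * algebraMap F K (y i) = algebraMap F K (x i) := congrFun ha i
  obtain ⟨j, hj⟩ := Function.ne_iff.1 hy
  have ha_mem : a = algebraMap F K (x j / y j) := by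
    rw [map_div₀, eq_div_iff (by simpa using hj), hcoord]
  refine (mk_eq_mk_iff' F _ _ hx hy).2 ⟨x j / y j, funext fun i => (algebraMap F K).injective ?_⟩
  rw [← hcoord, ha_mem, Pi.smul_apply, smul_eq_mul, map_mul]

lemma range_subgeometryMap_inter (f : (ι → K) ≃ₗ[K] V) (W : Submodule K V) :
    Set.range (subgeometryMap F f) ∩ W.projectivization =
      subgeometryMap F f '' (W.comap (subfieldMap F f)).projectivization := by
  rw [Set.inter_comm, ← Set.image_preimage_eq_inter_range]
  congr 1
  ext X
  induction X using Projectivization.ind with | h x hx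
  rfl

lemma ncard_range_subgeometryMap_inter (f : (ι → K) ≃ₗ[K] V) (W : Submodule K V) :
    (Set.range (subgeometryMap F f) ∩ W.projectivization).ncard =
      Nat.card (ℙ F (W.comap (subfieldMap F f))) := by
  rw [range_subgeometryMap_inter, Set.ncard_image_of_injective _ (subgeometryMap_injective F f),
    ncard_projectivization]

lemma comap_subfieldMap_ne_top [Finite ι] (f : (ι → K) ≃ₗ[K] V) {W : Submodule K V} (hW : W ≠ ⊤) :
    W.comap (subfieldMap F f) ≠ ⊤ := by
  classical
  contrapose! hW
  have hbasis (i : ι) : f (Pi.single i 1) ∈ W := by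
    have hi : Pi.single i 1 ∈ W.comap (subfieldMap F f) := hW ▸ Submodule.mem_top
    have hsingle : algebraMap F K ∘ Pi.single i 1 = Pi.single i 1 := by
      ext j
      simp [Pi.single_apply, apply_ite]
    rwa [Submodule.mem_comap, subfieldMap_apply, hsingle] at hi
  rw [eq_top_iff, ← ((Pi.basisFun K ι).map f).span_eq, Submodule.span_le]
  rintro _ ⟨i, rfl⟩
  simpa using hbasis i

variable {F}

lemma subfieldMap_transvection_trans (f : (ι → K) ≃ₗ[K] V) {c : Dual K (ι → K)} {u : ι → F}
    (hc : c (algebraMap F K ∘ u) = 0) (x : ι → F) :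
    subfieldMap F ((LinearEquiv.transvection hc).trans f) x =
      subfieldMap F f x + c (algebraMap F K ∘ x) • subfieldMap F f u := by
  simp [subfieldMap_apply, LinearMap.transvection.apply]

lemma comap_subfieldMap_transvection_trans (f : (ι → K) ≃ₗ[K] V) {c : Dual K (ι → K)} {u : ι → F}
    (hc : c (algebraMap F K ∘ u) = 0) {W : Submodule K V} (hW : subfieldMap F f u ∈ W) :
    W.comap (subfieldMap F ((LinearEquiv.transvection hc).trans f)) =
      W.comap (subfieldMap F f) := by
  ext x
  rw [Submodule.mem_comap, Submodule.mem_comap, subfieldMap_transvection_trans,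
    W.add_mem_iff_left (W.smul_mem _ hW)]

lemma exists_transvection_comap_ker_eq (f : (ι → K) ≃ₗ[K] V) (h : Dual K V) {u : ι → F}
    (hu : h (subfieldMap F f u) ≠ 0) :
    ∃ (c : Dual K (ι → K)) (hc : c (algebraMap F K ∘ u) = 0) (φ : Dual F (ι → F)), φ ≠ 0 ∧
      (LinearMap.ker h).comap (subfieldMap F ((LinearEquiv.transvection hc).trans f)) =
        LinearMap.ker φ := by
  have hu0 : u ≠ 0 := by
    rintro rfl
    simp at hu
  obtain ⟨i, hi⟩ := Function.ne_iff.1 hu0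
  let φ : Dual F (ι → F) := (u i)⁻¹ • LinearMap.proj i
  let φK : Dual K (ι → K) := algebraMap F K (u i)⁻¹ • LinearMap.proj i
  have hφK (x : ι → F) : φK (algebraMap F K ∘ x) = algebraMap F K (φ x) := by
    simp [φ, φK, Algebra.smul_def]
  have hφu : φ u = 1 := by simpa [φ] using inv_mul_cancel₀ hi
  -- `c` is chosen so that the transvected map sends `x` to a vector with `h`-value `φ x * h (f u)`.
  let c : Dual K (ι → K) := φK - (h (subfieldMap F f u))⁻¹ • h ∘ₗ f.toLinearMap
  have hc : c (algebraMap F K ∘ u) = 0 := by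
    simp [c, hφK, hφu, ← subfieldMap_apply, hu]
  refine ⟨c, hc, φ, fun hφ => by simp [hφ] at hφu, ?_⟩
  ext x
  have hval : h (subfieldMap F ((LinearEquiv.transvection hc).trans f) x) =
      algebraMap F K (φ x) * h (subfieldMap F f u) := by
    simp only [subfieldMap_transvection_trans, map_add, map_smul, c, LinearMap.sub_apply, hφK,
      LinearMap.smul_apply, LinearMap.comp_apply, LinearEquiv.coe_coe, ← subfieldMap_apply,
      smul_eq_mul]
    field_simp
    ring
  simp [hval, hu]

end Subgeometry

section Subplane

variable {F K : Type*} [Field F] [Field K] [Algebra F K] {π ℓ m : Set (PGPoint K)} {P : PGPoint K}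

lemma isSubplane_iff :
    IsSubplane F π ↔ ∃ f : (Fin 3 → K) ≃ₗ[K] (Fin 3 → K), π = Set.range (subgeometryMap F f) := by
  refine exists_congr fun f => ?_
  suffices hmap f '' basePlane F K = Set.range (subgeometryMap F f) by rw [this]
  ext X
  constructor
  · rintro ⟨_, ⟨v, hv, rfl, hvF⟩, rfl⟩
    choose x hx using hvF
    obtain rfl : algebraMap F K ∘ x = v := funext hx
    have hx0 : x ≠ 0 := by
      rintro rfl
      exact hv (funext fun _ => map_zero _)
    exact ⟨.mk F x hx0, rfl⟩
  · rintro ⟨Y, rfl⟩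
    induction Y using Projectivization.ind with | h x hx
    have hx0 : algebraMap F K ∘ x ≠ 0 := fun h =>
      hx ((algebraMap F K).injective.comp_left (h.trans (funext fun _ => (map_zero _).symm)))
    exact ⟨_, ⟨_, hx0, rfl, fun i => ⟨x i, rfl⟩⟩, rfl⟩

lemma finrank_comap_subfieldMap_eq_two (f : (Fin 3 → K) ≃ₗ[K] (Fin 3 → K))
    {W : Submodule K (Fin 3 → K)} (hW : finrank K W = 2)
    (hsec : (Set.range (subgeometryMap F f) ∩ W.projectivization).Nontrivial) :
    finrank F (W.comap (subfieldMap F f)) = 2 := by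
  have hW_ne : W ≠ ⊤ := by
    rintro rfl
    simp at hW
  have hlt := Submodule.finrank_lt (comap_subfieldMap_ne_top F f hW_ne)
  rw [range_subgeometryMap_inter] at hsec
  have hge := two_le_finrank_of_projectivization_nontrivial (Set.nontrivial_of_image _ _ hsec)
  rw [finrank_fin_fun] at hlt
  lia

lemma IsSubplane.ncard_inter_eq_iff [Finite F] (hπ : IsSubplane F π) (hℓ : IsLine ℓ) :
    (π ∩ ℓ).ncard = Nat.card F + 1 ↔ (π ∩ ℓ).Nontrivial := by
  refine ⟨fun hcard => ?_, fun hsec => ?_⟩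
  · have hF : 0 < Nat.card F := Nat.card_pos
    exact (Set.one_lt_ncard_iff_nontrivial_and_finite.1 (by lia)).1
  obtain ⟨f, rfl⟩ := isSubplane_iff.1 hπ
  obtain ⟨W, hW, rfl⟩ := isLine_iff.1 hℓ
  rw [ncard_range_subgeometryMap_inter,
    card_of_finrank_two _ _ (finrank_comap_subfieldMap_eq_two f hW hsec)]

lemma IsSubplane.exists_mem_inter (hπ : IsSubplane F π) (hℓ : IsLine ℓ) (hm : IsLine m)
    (hπℓ : (π ∩ ℓ).Nontrivial) (hπm : (π ∩ m).Nontrivial) : ∃ X ∈ π, X ∈ ℓ ∧ X ∈ m := by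
  obtain ⟨f, rfl⟩ := isSubplane_iff.1 hπ
  obtain ⟨W, hW, rfl⟩ := isLine_iff.1 hℓ
  obtain ⟨U, hU, rfl⟩ := isLine_iff.1 hm
  have hndisj : ¬ Disjoint (W.comap (subfieldMap F f)) (U.comap (subfieldMap F f)) := by
    intro hdisj
    have hdim := Submodule.finrank_add_finrank_le_of_disjoint hdisj
    rw [finrank_comap_subfieldMap_eq_two f hW hπℓ, finrank_comap_subfieldMap_eq_two f hU hπm,
      finrank_fin_fun] at hdim
    lia
  obtain ⟨x, ⟨hxW, hxU⟩, hx⟩ := Submodule.exists_mem_ne_zero_of_ne_bot (mt disjoint_iff.2 hndisj)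
  exact ⟨subgeometryMap F f (.mk F x hx), ⟨_, rfl⟩, hxW, hxU⟩

lemma IsSubplane.exists_same_secants [Finite F] (hπ : IsSubplane F π) (hP : P ∈ π) (hm : IsLine m)
    (hPm : P ∉ m) :
    ∃ π', IsSubplane F π' ∧ P ∈ π' ∧ (π' ∩ m).ncard = Nat.card F + 1 ∧
      ∀ ℓ, IsLine ℓ → P ∈ ℓ → (π' ∩ ℓ).ncard = (π ∩ ℓ).ncard := by
  obtain ⟨f, rfl⟩ := isSubplane_iff.1 hπ
  obtain ⟨U, hU, rfl⟩ := isLine_iff.1 hm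
  obtain ⟨X, rfl⟩ := hP
  induction X using Projectivization.ind with | h u hu
  obtain ⟨h, hhu, rfl⟩ := exists_dual_ker_eq (by rw [hU, finrank_fin_fun]) hPm
  obtain ⟨c, hc, φ, hφ, hker⟩ := exists_transvection_comap_ker_eq f h hhu
  refine ⟨Set.range (subgeometryMap F ((LinearEquiv.transvection hc).trans f)),
    isSubplane_iff.2 ⟨_, rfl⟩, ⟨.mk F u hu, ?_⟩, ?_, ?_⟩
  · simp only [subgeometryMap, map_mk, subfieldMap_transvection_trans, hc, zero_smul, add_zero]
  · have hφ_ker : finrank F (LinearMap.ker φ) = 2 := by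
      simpa using Dual.finrank_ker_add_one_of_ne_zero hφ
    rw [ncard_range_subgeometryMap_inter, hker, card_of_finrank_two _ _ hφ_ker]
  · intro ℓ hℓ hPℓ
    obtain ⟨W, -, rfl⟩ := isLine_iff.1 hℓ
    rw [ncard_range_subgeometryMap_inter, ncard_range_subgeometryMap_inter,
      comap_subfieldMap_transvection_trans f hc hPℓ]

end Subplane

section PencilTrace

variable {F K : Type*} [Field F] [Finite F] [Field K] [Algebra F K] {π : Set (PGPoint K)}
  {P : PGPoint K}

lemma mem_pencilTrace_iff (hπ : IsSubplane F π) {X : PGPoint K} :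
    X ∈ pencilTrace (Nat.card F) π P ↔
      X ∈ linf K ∧ ∃ ℓ, IsLine ℓ ∧ P ∈ ℓ ∧ (π ∩ ℓ).Nontrivial ∧ X ∈ ℓ :=
  and_congr_right fun _ => exists_congr fun _ => and_congr_right fun hℓ => by
    rw [hπ.ncard_inter_eq_iff hℓ]

lemma pencilTrace_subset_splash (hπ : IsSubplane F π) (hP : P ∈ π) :
    pencilTrace (Nat.card F) π P ⊆ splash π := by
  intro X hX
  obtain ⟨hX_inf, ℓ, hℓ, hPℓ, hsec, hXℓ⟩ := (mem_pencilTrace_iff hπ).1 hX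
  obtain ⟨Q, ⟨hQ, hQℓ⟩, hQP⟩ := hsec.exists_ne P
  exact ⟨hX_inf, P, Q, hP, hQ, hQP.symm, ℓ, hℓ, hPℓ, hQℓ, hXℓ⟩

lemma inter_linf_subset_pencilTrace (hπ : IsSubplane F π) (hP : P ∈ π) (hP_aff : P ∉ linf K) :
    π ∩ linf K ⊆ pencilTrace (Nat.card F) π P := by
  rintro X ⟨hX, hX_inf⟩
  have hPX : P ≠ X := fun h => hP_aff (h ▸ hX_inf)
  obtain ⟨ℓ, hℓ, hPℓ, hXℓ⟩ := exists_isLine_of_ne hPX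
  exact (mem_pencilTrace_iff hπ).2
    ⟨hX_inf, ℓ, hℓ, hPℓ, ⟨P, ⟨hP, hPℓ⟩, X, ⟨hX, hXℓ⟩, hPX⟩, hXℓ⟩

lemma pencilTrace_eq_inter_linf (hπ : IsSubplane F π) (hP : P ∈ π) (hP_aff : P ∉ linf K)
    (hsec : (π ∩ linf K).Nontrivial) : pencilTrace (Nat.card F) π P = π ∩ linf K := by
  refine (inter_linf_subset_pencilTrace hπ hP hP_aff).antisymm' fun X hX => ?_
  obtain ⟨hX_inf, ℓ, hℓ, hPℓ, hℓ_sec, hXℓ⟩ := (mem_pencilTrace_iff hπ).1 hX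
  obtain ⟨Y, hY, hYℓ, hY_inf⟩ := hπ.exists_mem_inter hℓ isLine_linf hℓ_sec hsec
  have hne : ℓ ≠ linf K := fun h => hP_aff (h ▸ hPℓ)
  obtain rfl := hℓ.inter_subsingleton isLine_linf hne ⟨hXℓ, hX_inf⟩ ⟨hYℓ, hY_inf⟩
  exact ⟨hY, hX_inf⟩

lemma pencilTrace_congr {π' : Set (PGPoint K)} {q : ℕ}
    (h : ∀ ℓ, IsLine ℓ → P ∈ ℓ → (π' ∩ ℓ).ncard = (π ∩ ℓ).ncard) :
    pencilTrace q π' P = pencilTrace q π P :=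
  Set.ext fun _ => and_congr_right fun _ => exists_congr fun ℓ => and_congr_right fun hℓ =>
    and_congr_right fun hPℓ => by rw [h ℓ hℓ hPℓ]

lemma isSubline_pencilTrace (hπ : IsSubplane F π) (hP : P ∈ π) (hP_aff : P ∉ linf K) :
    IsSubline F (Nat.card F) (pencilTrace (Nat.card F) π P) := by
  obtain ⟨π', hπ', hPπ', hcard, hsecants⟩ := hπ.exists_same_secants hP isLine_linf hP_aff
  refine ⟨π', linf K, hπ', isLine_linf, hcard, ?_⟩
  rw [← pencilTrace_congr hsecants, pencilTrace_eq_inter_linf hπ' hPπ' hP_aff]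
  exact (hπ'.ncard_inter_eq_iff isLine_linf).1 hcard

theorem statement0_general (hπ : IsSubplane F π) (hP : P ∈ π) (hP_aff : P ∉ linf K) :
    IsSubline F (Nat.card F) (pencilTrace (Nat.card F) π P) ∧
      pencilTrace (Nat.card F) π P ⊆ linf K ∧
      π ∩ linf K ⊆ pencilTrace (Nat.card F) π P ∧
      pencilTrace (Nat.card F) π P ⊆ splash π :=
  ⟨isSubline_pencilTrace hπ hP hP_aff, fun _ hX => hX.1,
    inter_linf_subset_pencilTrace hπ hP hP_aff, pencilTrace_subset_splash hπ hP⟩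

end PencilTrace

/-- For an order-`q`-subplane `π` tangent to `ℓ∞` at `T` and an affine
point `P` of `π`, the set `t_P` of points of `ℓ∞` on extended lines of `π` through `P`
is an order-`q`-subline of `ℓ∞` containing `T` and contained in the tangent splash of `π`. -/
theorem statement0 (q : ℕ) (F K : Type) [Field F] [Field K] [Fintype F] [Fintype K]
    [Algebra F K] (hF : Fintype.card F = q) (hK : Fintype.card K = q ^ 3)
    (π : Set (PGPoint K)) (T : PGPoint K)
    (hπ : IsSubplane F π) (htan : π ∩ linf K = {T})
    (P : PGPoint K) (hP : P ∈ π) (hPaff : P ∉ linf K) :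
    IsSubline F q (pencilTrace q π P) ∧ pencilTrace q π P ⊆ linf K ∧
      T ∈ pencilTrace q π P ∧ pencilTrace q π P ⊆ splash π := by
  obtain rfl : Nat.card F = q := Nat.card_eq_fintype_card.trans hF
  obtain ⟨hline, hinf, hT, hsplash⟩ := statement0_general hπ hP hPaff
  exact ⟨hline, hinf, hT (htan.symm ▸ rfl), hsplash⟩

end TangentSplashPaper
end

section
/- Let q be a prime power, let S_T be a tangent splash of ℓ∞ in PG(2,q³) with centre T, and let U, V be two distinct points of S_T \ {T}. Then the unique order-q-subline of ℓ∞ containing the three points T, U, V is contained in S_T. -/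
namespace TangentSplashPaper

open Projectivization

/-!
Two lines of the subplane, one through `U` and one through `V`, share a point `p` of the subplane,
because two `F`-subspaces of rank `2` meet nontrivially inside one of rank `3`; tangency and
`U ≠ T` force `p` off `ℓ∞`. Projecting the rank `3` subspace from `p` onto `ℓ∞` drops its rank to
`2`. The resulting linear set contains `T`, `U` and `V`, so it is a subline through them, and each
of its points lies on a line of the subplane through `p`, hence in the splash. Uniqueness holds
because three distinct points determine a rank `2` subspace up to a scalar of `K`.
-/

section LinearSet

open scoped Pointwise

variable {F K V : Type*} [Field F] [Field K] [AddCommGroup V] [Module F V] [Module K V]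

/-- The linear set of `PG(V)` determined by an `F`-subspace `M` of the `K`-space `V`, i.e. the set
of the points of `PG(V)` spanned by the nonzero vectors of `M`. Subplanes and sublines are linear
sets of rank `3` and `2`. -/
def linearSet (K : Type*) [Field K] [Module K V] (M : Submodule F V) : Set (Projectivization K V) :=
  {P | ∃ v ∈ M, ∃ hv : v ≠ 0, P = mk K v hv}

theorem mk_submodule_le_iff {v : V} {hv : v ≠ 0} {W : Submodule K V} :
    (mk K v hv).submodule ≤ W ↔ v ∈ W := by
  rw [submodule_mk, Submodule.span_singleton_le_iff_mem]

theorem mk_ne_mk_iff_linearIndependent {v w : V} {hv : v ≠ 0} {hw : w ≠ 0} :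
    mk K v hv ≠ mk K w hw ↔ LinearIndependent K ![v, w] := by
  rw [← independent_pair_iff_ne, independent_mk_iff_LinearIndependent]

theorem finrank_span_pair {u v : V} (huv : LinearIndependent K ![u, v]) :
    Module.finrank K (Submodule.span K {u, v}) = 2 := by
  rw [← Matrix.range_cons_cons_empty u v ![], finrank_span_eq_card huv, Fintype.card_fin]

theorem eq_span_pair_of_finrank_le_two {M : Submodule F V} [FiniteDimensional F M]
    (hM : Module.finrank F M ≤ 2) {u v : V} (hu : u ∈ M) (hv : v ∈ M)
    (huv : LinearIndependent F ![u, v]) : M = Submodule.span F {u, v} :=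
  (Submodule.eq_of_le_of_finrank_le (Submodule.span_le.2 (Set.pair_subset hu hv))
    (hM.trans (finrank_span_pair huv).ge)).symm

theorem le_of_finrank_eq_two_of_ne {W H : Submodule K V} (hW : Module.finrank K W = 2)
    {P Q : Projectivization K V} (hPQ : P ≠ Q) (hP : P.submodule ≤ W ⊓ H)
    (hQ : Q.submodule ≤ W ⊓ H) : W ≤ H := by
  induction P using Projectivization.ind with | h p hp
  induction Q using Projectivization.ind with | h q hq
  rw [mk_submodule_le_iff] at hP hQ
  have : FiniteDimensional K W := .of_finrank_pos (by lia)
  rw [eq_span_pair_of_finrank_le_two hW.le hP.1 hQ.1 (mk_ne_mk_iff_linearIndependent.1 hPQ)]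
  exact Submodule.span_le.2 (Set.pair_subset hP.2 hQ.2)

theorem exists_mem_inf_ne_zero {M A B : Submodule F V} [FiniteDimensional F M] (hA : A ≤ M)
    (hB : B ≤ M) (h : Module.finrank F M < Module.finrank F A + Module.finrank F B) :
    ∃ v ∈ A ⊓ B, v ≠ 0 := by
  have := Submodule.finiteDimensional_of_le hA
  have := Submodule.finiteDimensional_of_le hB
  apply Submodule.exists_mem_ne_zero_of_ne_bot
  intro hbot
  have hsum := Submodule.finrank_sup_add_finrank_inf_eq A B
  rw [hbot, finrank_bot, add_zero] at hsum
  exact h.not_ge (hsum ▸ Submodule.finrank_mono (sup_le hA hB))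

theorem finrank_map_lt_finrank {V' : Type*} [AddCommGroup V'] [Module F V'] {M : Submodule F V}
    [FiniteDimensional F M] {f : V →ₗ[F] V'} {v : V} (hv : v ∈ M) (hv0 : v ≠ 0) (hfv : f v = 0) :
    Module.finrank F (M.map f) < Module.finrank F M := by
  have hker : LinearMap.ker (f.domRestrict M) ≠ ⊥ := fun h ↦
    hv0 (congrArg Subtype.val (LinearMap.ker_eq_bot'.1 h ⟨v, hv⟩ hfv))
  rw [← LinearMap.range_domRestrict, ← LinearMap.finrank_range_add_finrank_ker (f.domRestrict M)]
  exact Nat.lt_add_of_pos_right (Submodule.one_le_finrank_iff.2 hker)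

variable [Algebra F K] [IsScalarTower F K V]

theorem linearSet_inter_setOf_submodule_le (M : Submodule F V) (W : Submodule K V) :
    linearSet K M ∩ {P | P.submodule ≤ W} = linearSet K (M ⊓ W.restrictScalars F) := by
  ext P
  constructor
  · rintro ⟨⟨v, hv, hv0, rfl⟩, hvW⟩
    exact ⟨v, ⟨hv, mk_submodule_le_iff (K := K).1 hvW⟩, hv0, rfl⟩
  · rintro ⟨v, ⟨hv, hvW⟩, hv0, rfl⟩
    exact ⟨⟨v, hv, hv0, rfl⟩, mk_submodule_le_iff.2 hvW⟩

theorem linearSet_smul {k : K} (hk : k ≠ 0) (M : Submodule F V) :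
    linearSet K (k • M) = linearSet K M := by
  ext P
  constructor
  · rintro ⟨_, ⟨v, hv, rfl⟩, hkv, rfl⟩
    have hv0 : v ≠ 0 := by rintro rfl; exact hkv (map_zero _)
    exact ⟨v, hv, hv0, (mk_eq_mk_iff' K _ _ _ _).2 ⟨k, rfl⟩⟩
  · rintro ⟨v, hv, hv0, rfl⟩
    exact ⟨k • v, Submodule.smul_mem_pointwise_smul v k M hv, smul_ne_zero hk hv0,
      (mk_eq_mk_iff' K _ _ _ _).2 ⟨k⁻¹, inv_smul_smul₀ hk v⟩⟩

theorem mk_smul_of_isScalarTower (a : F) {v : V} (hv : v ≠ 0) (hav : a • v ≠ 0) :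
    mk K (a • v) hav = mk K v hv :=
  (mk_eq_mk_iff' K _ _ _ _).2 ⟨algebraMap F K a, algebraMap_smul K a v⟩

theorem two_le_finrank_of_nontrivial_linearSet {M : Submodule F V} [FiniteDimensional F M]
    (hM : (linearSet K M).Nontrivial) : 2 ≤ Module.finrank F M := by
  obtain ⟨_, ⟨u, hu, hu0, rfl⟩, _, ⟨v, hv, hv0, rfl⟩, huv⟩ := hM
  have hK := (mk_ne_mk_iff_linearIndependent.1 huv).restrict_scalars' F
  have hF : LinearIndependent F ![(⟨u, hu⟩ : M), ⟨v, hv⟩] := by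
    refine .of_comp M.subtype ?_
    convert hK using 1
    funext i
    fin_cases i <;> rfl
  simpa using hF.fintype_card_le_finrank

theorem exists_eq_span_pair_of_finrank_le_two {M : Submodule F V} [FiniteDimensional F M]
    (hM : Module.finrank F M ≤ 2) {P Q R : Projectivization K V} (hP : P ∈ linearSet K M)
    (hQ : Q ∈ linearSet K M) (hR : R ∈ linearSet K M) (hPQ : P ≠ Q) (hPR : P ≠ R) (hQR : Q ≠ R) :
    ∃ (e₁ e₂ : V) (h₁ : e₁ ≠ 0) (h₂ : e₂ ≠ 0) (h₃ : e₁ + e₂ ≠ 0), P = mk K e₁ h₁ ∧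
      Q = mk K e₂ h₂ ∧ R = mk K (e₁ + e₂) h₃ ∧ M = Submodule.span F {e₁, e₂} := by
  obtain ⟨p, hp, hp0, rfl⟩ := hP
  obtain ⟨q, hq, hq0, rfl⟩ := hQ
  obtain ⟨r, hr, hr0, rfl⟩ := hR
  have hspan {u v : V} (hu : u ∈ M) (hv : v ∈ M) (huv : LinearIndependent K ![u, v]) :=
    eq_span_pair_of_finrank_le_two hM hu hv (huv.restrict_scalars' F)
  have hpq := mk_ne_mk_iff_linearIndependent.1 hPQ
  obtain ⟨a, b, rfl⟩ := Submodule.mem_span_pair.1 (hspan hp hq hpq ▸ hr)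
  have ha : a ≠ 0 := by
    rintro rfl
    exact hQR.symm ((mk_eq_mk_iff' K _ _ _ _).2 ⟨algebraMap F K b, by simp⟩)
  have hb : b ≠ 0 := by
    rintro rfl
    exact hPR.symm ((mk_eq_mk_iff' K _ _ _ _).2 ⟨algebraMap F K a, by simp⟩)
  have hap : a • p ≠ 0 := smul_ne_zero ha hp0
  have hbq : b • q ≠ 0 := smul_ne_zero hb hq0
  have hP : mk K p hp0 = mk K (a • p) hap := (mk_smul_of_isScalarTower ..).symm
  have hQ : mk K q hq0 = mk K (b • q) hbq := (mk_smul_of_isScalarTower ..).symm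
  rw [hP, hQ] at hPQ
  exact ⟨a • p, b • q, hap, hbq, hr0, hP, hQ, rfl, hspan (M.smul_mem a hp) (M.smul_mem b hq)
    (mk_ne_mk_iff_linearIndependent.1 hPQ)⟩

theorem linearSet_eq_of_finrank_le_two {M N : Submodule F V} [FiniteDimensional F M]
    [FiniteDimensional F N] (hM : Module.finrank F M ≤ 2) (hN : Module.finrank F N ≤ 2)
    {P Q R : Projectivization K V} (hPM : P ∈ linearSet K M) (hQM : Q ∈ linearSet K M)
    (hRM : R ∈ linearSet K M) (hPN : P ∈ linearSet K N) (hQN : Q ∈ linearSet K N)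
    (hRN : R ∈ linearSet K N) (hPQ : P ≠ Q) (hPR : P ≠ R) (hQR : Q ≠ R) :
    linearSet K M = linearSet K N := by
  obtain ⟨e₁, e₂, he₁, he₂, he₃, rfl, rfl, rfl, rfl⟩ :=
    exists_eq_span_pair_of_finrank_le_two hM hPM hQM hRM hPQ hPR hQR
  obtain ⟨g₁, g₂, hg₁, hg₂, hg₃, h₁, h₂, h₃, rfl⟩ :=
    exists_eq_span_pair_of_finrank_le_two hN hPN hQN hRN hPQ hPR hQR
  have hg : LinearIndependent K ![g₁, g₂] :=
    mk_ne_mk_iff_linearIndependent.1 (h₁ ▸ h₂ ▸ hPQ)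
  obtain ⟨a, rfl⟩ := (mk_eq_mk_iff' K _ _ _ _).1 h₁
  obtain ⟨b, rfl⟩ := (mk_eq_mk_iff' K _ _ _ _).1 h₂
  obtain ⟨c, hc⟩ := (mk_eq_mk_iff' K _ _ _ _).1 h₃
  obtain ⟨rfl, rfl⟩ := hg.eq_of_pair (smul_add c g₁ g₂ ▸ hc)
  have hc0 : c ≠ 0 := by rintro rfl; exact he₁ (zero_smul K g₁)
  rw [← linearSet_smul hc0 (Submodule.span F {g₁, g₂}), Submodule.smul_span,
    Set.smul_set_insert, Set.smul_set_singleton]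

section Form

variable {ι : Type*} [Finite ι] {b : Module.Basis ι K V}

theorem linearIndependent_coe_of_le_span_basis {M : Submodule F V}
    (hM : M ≤ Submodule.span F (Set.range b)) {κ : Type*} {v : κ → M}
    (hv : LinearIndependent F v) : LinearIndependent K fun i ↦ (v i : V) := by
  cases nonempty_fintype ι
  let coord : M →ₗ[F] ι → F := (b.restrictScalars F).equivFun ∘ₗ Submodule.inclusion hM
  have hcoord : LinearMap.ker coord = ⊥ := LinearMap.ker_eq_bot.2
    ((b.restrictScalars F).equivFun.injective.comp (Submodule.inclusion_injective hM))
  have hK : LinearIndependent K fun i ↦ algebraMap F K ∘ coord (v i) :=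
    linearIndependent_algebraMap_comp_iff.2 (hv.map' coord hcoord)
  refine .of_comp b.equivFun.toLinearMap ?_
  convert hK using 2 with i
  ext j
  simp [coord]

theorem finrank_le_finrank_of_le_span_basis {M : Submodule F V} [FiniteDimensional F M]
    (hM : M ≤ Submodule.span F (Set.range b)) {W : Submodule K V}
    (hMW : M ≤ W.restrictScalars F) : Module.finrank F M ≤ Module.finrank K W := by
  have := Module.Finite.of_basis b
  let c := Module.finBasis F M
  have hc : LinearIndependent K fun i ↦ (⟨c i, hMW (c i).2⟩ : W) :=
    .of_comp W.subtype (linearIndependent_coe_of_le_span_basis hM c.linearIndependent)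
  simpa using hc.fintype_card_le_finrank

theorem ncard_linearSet {M : Submodule F V} (hM : M ≤ Submodule.span F (Set.range b)) :
    (linearSet K M).ncard = Nat.card (Projectivization F M) := by
  let φ : M →ₛₗ[algebraMap F K] V :=
    { toFun := (↑), map_add' := fun _ _ ↦ rfl, map_smul' := fun a v ↦ (algebraMap_smul K a _).symm }
  have hφ : Function.Injective (Projectivization.map φ Subtype.val_injective) := by
    intro P Q hPQ
    induction P using Projectivization.ind with | h p hp
    induction Q using Projectivization.ind with | h q hq
    contrapose! hPQ
    refine mk_ne_mk_iff_linearIndependent.2 ?_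
    convert linearIndependent_coe_of_le_span_basis hM (mk_ne_mk_iff_linearIndependent.1 hPQ)
      with i
    fin_cases i <;> rfl
  have hrange : linearSet K M = Set.range (Projectivization.map φ Subtype.val_injective) := by
    ext P
    constructor
    · rintro ⟨v, hv, hv0, rfl⟩
      exact ⟨mk F ⟨v, hv⟩ (by simpa using hv0), rfl⟩
    · rintro ⟨Q, rfl⟩
      induction Q using Projectivization.ind with | h q hq
      exact ⟨q, q.2, by simpa using hq, rfl⟩
  rw [hrange, Set.ncard_range_of_injective hφ]

theorem ncard_linearSet_of_finrank_eq_two [Finite F] {M : Submodule F V}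
    (hM : M ≤ Submodule.span F (Set.range b)) (hrank : Module.finrank F M = 2) :
    (linearSet K M).ncard = Nat.card F + 1 := by
  rw [ncard_linearSet hM, Projectivization.card_of_finrank_two F M hrank]

end Form

end LinearSet

section CentralProjection

variable {K V : Type*} [Field K] [AddCommGroup V] [Module K V]

/-- The projection of `V` from the vector `p` onto the hyperplane `ker η`; it is meaningful for
`η p ≠ 0`. -/
def centralProj (η : Module.Dual K V) (p : V) : V →ₗ[K] V :=
  LinearMap.id - (η p)⁻¹ • η.smulRight p

theorem centralProj_apply (η : Module.Dual K V) (p v : V) :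
    centralProj η p v = v - ((η p)⁻¹ * η v) • p := by
  simp [centralProj, mul_smul]

variable {η : Module.Dual K V} {p : V}

theorem centralProj_self (hp : η p ≠ 0) : centralProj η p p = 0 := by
  rw [centralProj_apply, inv_mul_cancel₀ hp, one_smul, sub_self]

theorem centralProj_eq_self {v : V} (hv : η v = 0) : centralProj η p v = v := by
  rw [centralProj_apply, hv, mul_zero, zero_smul, sub_zero]

theorem centralProj_mem_ker (hp : η p ≠ 0) (v : V) :
    centralProj η p v ∈ LinearMap.ker η := by
  rw [LinearMap.mem_ker, centralProj_apply, map_sub, map_smul, smul_eq_mul]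
  field_simp
  ring

theorem centralProj_mem {W : Submodule K V} {v : V} (hp : p ∈ W) (hv : v ∈ W) :
    centralProj η p v ∈ W := by
  rw [centralProj_apply]
  exact W.sub_mem hv (W.smul_mem _ hp)

theorem centralProj_ne_zero_iff_linearIndependent (hp : η p ≠ 0) {v : V} :
    centralProj η p v ≠ 0 ↔ LinearIndependent K ![p, v] := by
  have hp0 : p ≠ 0 := by rintro rfl; exact hp (map_zero η)
  rw [LinearIndependent.pair_iff' hp0]
  refine ⟨?_, fun h h0 ↦ h _ (sub_eq_zero.1 (centralProj_apply η p v ▸ h0)).symm⟩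
  rintro h a rfl
  exact h (by rw [map_smul, centralProj_self hp, smul_zero])

end CentralProjection

section Tangent

variable {F K V : Type*} [Field F] [Field K] [AddCommGroup V] [Module F V] [Module K V]

/-- `W` is a line of `PG(V)` that meets the linear set of `Λ` in at least two points. For the linear
set of a subplane these are the extended lines of the subplane. -/
def IsSecant (Λ : Submodule F V) [Algebra F K] [IsScalarTower F K V] (W : Submodule K V) : Prop :=
  Module.finrank K W = 2 ∧ (linearSet K (Λ ⊓ W.restrictScalars F)).Nontrivial

variable [Algebra F K] [IsScalarTower F K V] {Λ : Submodule F V} {W W' : Submodule K V}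
  {η : Module.Dual K V} {p : V} {T X Y : Projectivization K V}

theorem IsSecant.mem_linearSet_map_centralProj (hW : IsSecant Λ W) (hpΛ : p ∈ Λ) (hpW : p ∈ W)
    (hp : η p ≠ 0) (hX : X.submodule ≤ W ⊓ LinearMap.ker η) :
    X ∈ linearSet K (Λ.map ((centralProj η p).restrictScalars F)) := by
  have hp0 : p ≠ 0 := by rintro rfl; exact hp (map_zero η)
  obtain ⟨_, ⟨m, ⟨hmΛ, hmW⟩, hm0, rfl⟩, hmp⟩ := hW.2.exists_ne (mk K p hp0)
  have hm : centralProj η p m ≠ 0 := (centralProj_ne_zero_iff_linearIndependent hp).2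
    (mk_ne_mk_iff_linearIndependent.1 hmp.symm)
  refine ⟨centralProj η p m, ⟨m, hmΛ, rfl⟩, hm, ?_⟩
  by_contra hne
  exact hp (le_of_finrank_eq_two_of_ne hW.1 hne hX (mk_submodule_le_iff.2
    ⟨centralProj_mem hpW hmW, centralProj_mem_ker hp m⟩) hpW)

theorem finrank_map_centralProj_lt [FiniteDimensional F Λ] (hpΛ : p ∈ Λ) (hp : η p ≠ 0) :
    Module.finrank F (Λ.map ((centralProj η p).restrictScalars F)) < Module.finrank F Λ :=
  finrank_map_lt_finrank hpΛ (by rintro rfl; exact hp (map_zero η)) (centralProj_self hp)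

theorem mem_linearSet_map_centralProj_of_le_ker (hX : X ∈ linearSet K Λ)
    (hXη : X.submodule ≤ LinearMap.ker η) :
    X ∈ linearSet K (Λ.map ((centralProj η p).restrictScalars F)) := by
  obtain ⟨v, hv, hv0, rfl⟩ := hX
  exact ⟨v, ⟨v, hv, centralProj_eq_self (mk_submodule_le_iff.1 hXη)⟩, hv0, rfl⟩

theorem IsSecant.not_le_ker (hW : IsSecant Λ W)
    (hT : linearSet K Λ ∩ {P | P.submodule ≤ LinearMap.ker η} = {T}) :
    ¬ W ≤ LinearMap.ker η := by
  intro hle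
  refine Set.not_nontrivial_singleton (x := T) (hW.2.mono ?_)
  rw [← linearSet_inter_setOf_submodule_le, ← hT]
  exact Set.inter_subset_inter_right _ fun _ hP ↦ le_trans hP hle

theorem IsSecant.apply_ne_zero (hW : IsSecant Λ W)
    (hT : linearSet K Λ ∩ {P | P.submodule ≤ LinearMap.ker η} = {T})
    (hX : X.submodule ≤ W ⊓ LinearMap.ker η) (hXT : X ≠ T) (hpΛ : p ∈ Λ) (hpW : p ∈ W)
    (hp0 : p ≠ 0) : η p ≠ 0 := by
  intro hp
  have hpT : mk K p hp0 = T := hT.subset ⟨⟨p, hpΛ, hp0, rfl⟩, mk_submodule_le_iff.2 hp⟩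
  exact hW.not_le_ker hT (le_of_finrank_eq_two_of_ne hW.1 (hpT ▸ hXT) hX
    (mk_submodule_le_iff.2 ⟨hpW, hp⟩))

theorem exists_mem_linearSet_map_centralProj [FiniteDimensional F Λ]
    (hΛ : Module.finrank F Λ ≤ 3)
    (hT : linearSet K Λ ∩ {P | P.submodule ≤ LinearMap.ker η} = {T})
    (hW : IsSecant Λ W) (hX : X.submodule ≤ W ⊓ LinearMap.ker η) (hXT : X ≠ T)
    (hW' : IsSecant Λ W') (hY : Y.submodule ≤ W' ⊓ LinearMap.ker η) :
    ∃ p ∈ Λ, η p ≠ 0 ∧ X ∈ linearSet K (Λ.map ((centralProj η p).restrictScalars F)) ∧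
      Y ∈ linearSet K (Λ.map ((centralProj η p).restrictScalars F)) := by
  have hrank {A : Submodule K V} (hA : IsSecant Λ A) :
      2 ≤ Module.finrank F ↥(Λ ⊓ A.restrictScalars F) :=
    have : FiniteDimensional F ↥(Λ ⊓ A.restrictScalars F) :=
      Submodule.finiteDimensional_of_le inf_le_left
    two_le_finrank_of_nontrivial_linearSet hA.2
  have hlt := hΛ.trans_lt (Nat.lt_of_succ_le (Nat.add_le_add (hrank hW) (hrank hW')))
  obtain ⟨p, ⟨⟨hpΛ, hpW⟩, -, hpW'⟩, hp0⟩ := exists_mem_inf_ne_zero inf_le_left inf_le_left hlt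
  have hp := hW.apply_ne_zero hT hX hXT hpΛ hpW hp0
  exact ⟨p, hpΛ, hp, hW.mem_linearSet_map_centralProj hpΛ hpW hp hX,
    hW'.mem_linearSet_map_centralProj hpΛ hpW' hp hY⟩

end Tangent

section ProjectivePlane

variable {F K : Type*} [Field F] [Field K] [Algebra F K] {S : Set (PGPoint K)}

theorem linf_eq_setOf_submodule_le :
    linf K = {P : PGPoint K | P.submodule ≤ LinearMap.ker (LinearMap.proj (R := K) 2)} := by
  ext P
  rw [Set.mem_ofPred_eq, submodule_eq, Submodule.span_singleton_le_iff_mem]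
  rfl

theorem basePlane_eq_linearSet :
    basePlane F K = linearSet K (Submodule.span F (Set.range (Pi.basisFun K (Fin 3)))) := by
  ext P
  simp only [basePlane, linearSet, Set.mem_ofPred_eq, Module.Basis.mem_span_iff_repr_mem,
    Pi.basisFun_repr]
  constructor
  · rintro ⟨v, hv, rfl, h⟩
    exact ⟨v, h, hv, rfl⟩
  · rintro ⟨v, h, hv, rfl⟩
    exact ⟨v, hv, rfl, h⟩

theorem hmap_image_linearSet (f : (Fin 3 → K) ≃ₗ[K] (Fin 3 → K)) (M : Submodule F (Fin 3 → K)) :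
    hmap f '' linearSet K M = linearSet K (M.map (f.toLinearMap.restrictScalars F)) := by
  ext P
  constructor
  · rintro ⟨_, ⟨v, hv, hv0, rfl⟩, rfl⟩
    exact ⟨f v, ⟨v, hv, rfl⟩, f.map_ne_zero_iff.2 hv0, rfl⟩
  · rintro ⟨_, ⟨v, hv, rfl⟩, hv0, rfl⟩
    exact ⟨_, ⟨v, hv, f.map_ne_zero_iff.1 hv0, rfl⟩, rfl⟩

theorem isSubplane_iff_exists_basis :
    IsSubplane F S ↔ ∃ b : Module.Basis (Fin 3) K (Fin 3 → K),
      S = linearSet K (Submodule.span F (Set.range b)) := by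
  have himage (f : (Fin 3 → K) ≃ₗ[K] (Fin 3 → K)) : hmap f '' basePlane F K =
      linearSet K (Submodule.span F (Set.range ((Pi.basisFun K (Fin 3)).map f))) := by
    rw [basePlane_eq_linearSet, hmap_image_linearSet, Submodule.map_span, ← Set.range_comp]
    rfl
  constructor
  · rintro ⟨f, rfl⟩
    exact ⟨_, himage f⟩
  · rintro ⟨b, rfl⟩
    refine ⟨(Pi.basisFun K (Fin 3)).equiv b (.refl _), ?_⟩
    rw [himage, Module.Basis.map_equiv, Equiv.refl_symm, Module.Basis.reindex_refl]

theorem mem_splash_linearSet {Λ : Submodule F (Fin 3 → K)} {X : PGPoint K} :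
    X ∈ splash (linearSet K Λ) ↔ X ∈ linf K ∧ ∃ W : Submodule K (Fin 3 → K),
      IsSecant Λ W ∧ X.submodule ≤ W := by
  refine and_congr_right fun _ ↦ ⟨?_, ?_⟩
  · rintro ⟨P, Q, hP, hQ, hPQ, _, ⟨W, hW, rfl⟩, hPW, hQW, hXW⟩
    refine ⟨W, ⟨hW, ?_⟩, hXW⟩
    rw [← linearSet_inter_setOf_submodule_le]
    exact ⟨P, ⟨hP, hPW⟩, Q, ⟨hQ, hQW⟩, hPQ⟩
  · rintro ⟨W, ⟨hW, P, hP, Q, hQ, hPQ⟩, hXW⟩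
    rw [← linearSet_inter_setOf_submodule_le] at hP hQ
    exact ⟨P, Q, hP.1, hQ.1, hPQ, _, ⟨W, hW, rfl⟩, hP.2, hQ.2, hXW⟩

theorem linearSet_map_centralProj_subset_splash {Λ : Submodule F (Fin 3 → K)} {p : Fin 3 → K}
    (hpΛ : p ∈ Λ) (hp : p 2 ≠ 0) :
    linearSet K (Λ.map ((centralProj (LinearMap.proj 2) p).restrictScalars F)) ⊆
      splash (linearSet K Λ) := by
  rintro _ ⟨_, ⟨w, hw, rfl⟩, hw0, rfl⟩
  have hpw : LinearIndependent K ![p, w] := (centralProj_ne_zero_iff_linearIndependent hp).1 hw0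
  have hp0 : p ≠ 0 := hpw.ne_zero 0
  have hw0' : w ≠ 0 := hpw.ne_zero 1
  have hpW : p ∈ Submodule.span K {p, w} := Submodule.subset_span (.inl rfl)
  have hwW : w ∈ Submodule.span K {p, w} := Submodule.subset_span (.inr rfl)
  refine mem_splash_linearSet.2 ⟨?_, Submodule.span K {p, w}, ⟨?_, ?_⟩, ?_⟩
  · rw [linf_eq_setOf_submodule_le]
    exact mk_submodule_le_iff.2 (centralProj_mem_ker hp w)
  · exact finrank_span_pair hpw
  · exact ⟨mk K p hp0, ⟨p, ⟨hpΛ, hpW⟩, hp0, rfl⟩, mk K w hw0', ⟨w, ⟨hw, hwW⟩, hw0', rfl⟩,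
      mk_ne_mk_iff_linearIndependent.2 hpw⟩
  · exact mk_submodule_le_iff.2 (centralProj_mem hpW hwW)

theorem exists_basis_span_pair_eq_inf {e₁ e₂ : Fin 3 → K} (he : LinearIndependent K ![e₁, e₂]) :
    ∃ b : Module.Basis (Fin 3) K (Fin 3 → K), Submodule.span F {e₁, e₂} =
      Submodule.span F (Set.range b) ⊓ (Submodule.span K {e₁, e₂}).restrictScalars F := by
  obtain ⟨e₃, he₃⟩ := exists_linearIndependent_cons_of_lt_finrank he (by simp)
  let b := basisOfLinearIndependentOfCardEqFinrank he₃ (by simp)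
  have hb : ⇑b = ![e₃, e₁, e₂] := coe_basisOfLinearIndependentOfCardEqFinrank he₃ (by simp)
  have : FiniteDimensional F (Submodule.span F (Set.range b)) :=
    .span_of_finite F (Set.finite_range b)
  have : FiniteDimensional F ↥(Submodule.span F (Set.range b) ⊓
      (Submodule.span K {e₁, e₂}).restrictScalars F) :=
    Submodule.finiteDimensional_of_le inf_le_left
  have hrank := finrank_le_finrank_of_le_span_basis (F := F) (b := b) inf_le_left
    (inf_le_right (b := (Submodule.span K {e₁, e₂}).restrictScalars F))
  rw [finrank_span_pair he] at hrank
  refine ⟨b, (eq_span_pair_of_finrank_le_two hrank ⟨?_, ?_⟩ ⟨?_, ?_⟩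
    (he.restrict_scalars' F)).symm⟩
  · exact Submodule.subset_span ⟨1, by rw [hb]; rfl⟩
  · exact Submodule.subset_span (.inl rfl)
  · exact Submodule.subset_span ⟨2, by rw [hb]; rfl⟩
  · exact Submodule.subset_span (.inr rfl)

theorem isSubline_iff_exists_span_pair [Finite F] :
    IsSubline F (Nat.card F) S ↔ ∃ e₁ e₂ : Fin 3 → K, LinearIndependent K ![e₁, e₂] ∧
      S = linearSet K (Submodule.span F {e₁, e₂}) := by
  constructor
  · rintro ⟨_, _, hS, ⟨W, hW, rfl⟩, hcard, rfl⟩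
    obtain ⟨b, rfl⟩ := isSubplane_iff_exists_basis.1 hS
    rw [linearSet_inter_setOf_submodule_le] at hcard ⊢
    set M := Submodule.span F (Set.range b) ⊓ W.restrictScalars F
    have : FiniteDimensional F (Submodule.span F (Set.range b)) :=
      .span_of_finite F (Set.finite_range b)
    have : FiniteDimensional F M := Submodule.finiteDimensional_of_le inf_le_left
    have hrank : Module.finrank F M ≤ 2 :=
      hW ▸ finrank_le_finrank_of_le_span_basis inf_le_left inf_le_right
    have htwo : 1 < (linearSet K M).ncard := hcard ▸ Nat.lt_add_of_pos_left Nat.card_pos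
    obtain ⟨_, ⟨u, hu, hu0, rfl⟩, _, ⟨v, hv, hv0, rfl⟩, huv⟩ :=
      (Set.one_lt_ncard (Set.finite_of_ncard_pos (by lia))).1 htwo
    have huv := mk_ne_mk_iff_linearIndependent.1 huv
    exact ⟨u, v, huv, by
      rw [← eq_span_pair_of_finrank_le_two hrank hu hv (huv.restrict_scalars' F)]⟩
  · rintro ⟨e₁, e₂, he, rfl⟩
    obtain ⟨b, hb⟩ := exists_basis_span_pair_eq_inf (F := F) he
    refine ⟨_, _, isSubplane_iff_exists_basis.2 ⟨b, rfl⟩,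
      ⟨Submodule.span K {e₁, e₂}, finrank_span_pair he, rfl⟩, ?_⟩
    rw [linearSet_inter_setOf_submodule_le, ← hb]
    exact ⟨ncard_linearSet_of_finrank_eq_two (hb.trans_le inf_le_left)
      (finrank_span_pair (he.restrict_scalars' F)), rfl⟩

theorem IsSubline.eq_of_three_mem [Finite F] {S' : Set (PGPoint K)}
    (hS : IsSubline F (Nat.card F) S) (hS' : IsSubline F (Nat.card F) S') {P Q R : PGPoint K}
    (hP : P ∈ S) (hQ : Q ∈ S) (hR : R ∈ S) (hP' : P ∈ S') (hQ' : Q ∈ S') (hR' : R ∈ S')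
    (hPQ : P ≠ Q) (hPR : P ≠ R) (hQR : Q ≠ R) : S = S' := by
  obtain ⟨e₁, e₂, he, rfl⟩ := isSubline_iff_exists_span_pair.1 hS
  obtain ⟨g₁, g₂, hg, rfl⟩ := isSubline_iff_exists_span_pair.1 hS'
  have := FiniteDimensional.span_of_finite F (Set.toFinite {e₁, e₂})
  have := FiniteDimensional.span_of_finite F (Set.toFinite {g₁, g₂})
  exact linearSet_eq_of_finrank_le_two (finrank_span_pair (he.restrict_scalars' F)).le
    (finrank_span_pair (hg.restrict_scalars' F)).le hP hQ hR hP' hQ' hR' hPQ hPR hQR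

theorem IsTangentSplash.exists_linearSet_subset {T U V : PGPoint K} (hS : IsTangentSplash F S T)
    (hU : U ∈ S) (hV : V ∈ S) (hUT : U ≠ T) :
    ∃ M : Submodule F (Fin 3 → K), FiniteDimensional F M ∧ Module.finrank F M ≤ 2 ∧
      T ∈ linearSet K M ∧ U ∈ linearSet K M ∧ V ∈ linearSet K M ∧ linearSet K M ⊆ S := by
  obtain ⟨_, hπ, hT, rfl⟩ := hS
  obtain ⟨b, rfl⟩ := isSubplane_iff_exists_basis.1 hπ
  obtain ⟨hUinf, W, hW, hUW⟩ := mem_splash_linearSet.1 hU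
  obtain ⟨hVinf, W', hW', hVW'⟩ := mem_splash_linearSet.1 hV
  rw [linf_eq_setOf_submodule_le] at hT hUinf hVinf
  set Λ := Submodule.span F (Set.range b)
  have : FiniteDimensional F Λ := .span_of_finite F (Set.finite_range b)
  have hΛ : Module.finrank F Λ ≤ 3 := finrank_range_le_card b
  have hTΛ := hT.superset (Set.mem_singleton T)
  obtain ⟨p, hpΛ, hp, hUM, hVM⟩ := exists_mem_linearSet_map_centralProj hΛ hT hW
    (le_inf hUW hUinf) hUT hW' (le_inf hVW' hVinf)
  exact ⟨_, inferInstance, Nat.le_of_lt_succ ((finrank_map_centralProj_lt hpΛ hp).trans_le hΛ),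
    mem_linearSet_map_centralProj_of_le_ker hTΛ.1 hTΛ.2, hUM, hVM,
    linearSet_map_centralProj_subset_splash hpΛ hp⟩

end ProjectivePlane

theorem statement2_general {F K : Type*} [Field F] [Finite F] [Field K] [Algebra F K]
    {S : Set (PGPoint K)} {T U V : PGPoint K} (hS : IsTangentSplash F S T) (hU : U ∈ S)
    (hV : V ∈ S) (hUT : U ≠ T) (hVT : V ≠ T) (hUV : U ≠ V) :
    ∃ b : Set (PGPoint K),
      (IsSubline F (Nat.card F) b ∧ T ∈ b ∧ U ∈ b ∧ V ∈ b) ∧ b ⊆ S ∧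
      ∀ b' : Set (PGPoint K),
        (IsSubline F (Nat.card F) b' ∧ T ∈ b' ∧ U ∈ b' ∧ V ∈ b') → b' = b := by
  obtain ⟨M, _, hM, hTM, hUM, hVM, hMS⟩ := hS.exists_linearSet_subset hU hV hUT
  have hsubline : IsSubline F (Nat.card F) (linearSet K M) := by
    obtain ⟨e₁, e₂, _, _, _, rfl, rfl, -, rfl⟩ :=
      exists_eq_span_pair_of_finrank_le_two hM hTM hUM hVM hUT.symm hVT.symm hUV
    exact isSubline_iff_exists_span_pair.2
      ⟨e₁, e₂, mk_ne_mk_iff_linearIndependent.1 hUT.symm, rfl⟩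
  exact ⟨linearSet K M, ⟨hsubline, hTM, hUM, hVM⟩, hMS, fun b' ⟨hb', hT, hU, hV⟩ ↦
    hb'.eq_of_three_mem hsubline hT hU hV hTM hUM hVM hUT.symm hVT.symm hUV⟩

/-- for distinct non-centre points `U, V` of a tangent splash `S` with
centre `T`, the unique order-`q`-subline containing `T, U, V` is contained in `S`. -/
theorem statement2 (q : ℕ) (F K : Type) [Field F] [Field K] [Fintype F] [Fintype K]
    [Algebra F K] (hF : Fintype.card F = q) (hK : Fintype.card K = q ^ 3)
    (S : Set (PGPoint K)) (T U V : PGPoint K)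
    (hS : IsTangentSplash F S T)
    (hU : U ∈ S) (hV : V ∈ S) (hUT : U ≠ T) (hVT : V ≠ T) (hUV : U ≠ V) :
    ∃ b : Set (PGPoint K),
      (IsSubline F q b ∧ T ∈ b ∧ U ∈ b ∧ V ∈ b) ∧ b ⊆ S ∧
      ∀ b' : Set (PGPoint K), (IsSubline F q b' ∧ T ∈ b' ∧ U ∈ b' ∧ V ∈ b') → b' = b := by
  rw [← Nat.card_eq_fintype_card] at hF
  exact hF ▸ statement2_general hS hU hV hUT hVT hUV

end TangentSplashPaper
end

section
/- Let q be a prime power. The subgroup of PGL(3,q³) consisting of the homographies of PG(2,q³) that stabilize the line ℓ∞ (as a set of points) acts transitively on the set of all order-q-subplanes of PG(2,q³) that meet ℓ∞ in exactly one point. -/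
namespace TangentSplashPaper

open Projectivization

/-!
Let `φ : F³ → K` be the linear form cutting out `ℓ∞`, written in the coordinates of a subplane `π`
and restricted to `F³`. The points of `π` on `ℓ∞` are the points of `PG(ker φ)`, so `π` meets `ℓ∞`
in one point only if `range φ` is an `F`-plane of `K`. As `[K : F] ≤ 3`, the group `Kˣ` is
transitive on these planes: `c` sends `⟨a, b⟩` into `U` as soon as `c ∈ a⁻¹U ∩ b⁻¹U`, an
intersection of two planes. After rescaling, the forms of two such subplanes have the same range,
hence differ by an element of `GL(3,F)`, and this element induces the homography sought.
-/

section LinearAlgebra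

variable {F V W : Type*} [Field F] [AddCommGroup V] [Module F V] [AddCommGroup W] [Module F W]

theorem exists_linearEquiv_range_prod_ker (φ : V →ₗ[F] W) :
    ∃ e : V ≃ₗ[F] LinearMap.range φ × LinearMap.ker φ, ∀ v, ((e v).1 : W) = φ v := by
  obtain ⟨C, hC⟩ := (LinearMap.ker φ).exists_isCompl
  exact ⟨LinearMap.equivProdOfSurjectiveOfIsCompl φ.rangeRestrict
    ((LinearMap.ker φ).projectionOnto C hC) φ.range_rangeRestrict
    (Submodule.range_projectionOnto hC) (by simpa using hC), fun _ => rfl⟩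

theorem exists_linearEquiv_comp_eq_of_range_eq [FiniteDimensional F V] {φ ψ : V →ₗ[F] W}
    (h : LinearMap.range φ = LinearMap.range ψ) : ∃ g : V ≃ₗ[F] V, ψ ∘ₗ g = φ := by
  obtain ⟨e, he⟩ := exists_linearEquiv_range_prod_ker φ
  obtain ⟨e', he'⟩ := exists_linearEquiv_range_prod_ker ψ
  have hker : Module.finrank F (LinearMap.ker φ) = Module.finrank F (LinearMap.ker ψ) := by
    have hφ := φ.finrank_range_add_finrank_ker
    have hψ := ψ.finrank_range_add_finrank_ker
    rw [h] at hφ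
    omega
  refine ⟨e ≪≫ₗ (LinearEquiv.ofEq _ _ h).prodCongr (.ofFinrankEq _ _ hker) ≪≫ₗ e'.symm, ?_⟩
  ext v
  simp [← he', he]

theorem finrank_eq_of_card_eq_pow [Fintype F] [Fintype V] {n : ℕ}
    (h : Fintype.card V = Fintype.card F ^ n) : Module.finrank F V = n :=
  Nat.pow_right_injective Fintype.one_lt_card (Module.card_eq_pow_finrank.symm.trans h)

end LinearAlgebra

section FieldExtension

open scoped Pointwise

variable {F K : Type*} [Field F] [Field K] [Algebra F K]

theorem exists_ne_zero_forall_mul_mem [FiniteDimensional F K] {ι : Type*} [Fintype ι]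
    (U : Submodule F K) (a : ι → K)
    (h : Fintype.card ι * Module.finrank F (K ⧸ U) < Module.finrank F K) :
    ∃ c : K, c ≠ 0 ∧ ∀ i, c * a i ∈ U := by
  let residues : K →ₗ[F] ι → K ⧸ U := LinearMap.pi fun i => U.mkQ ∘ₗ LinearMap.mulRight F (a i)
  have hker : LinearMap.ker residues ≠ ⊥ :=
    LinearMap.ker_ne_bot_of_finrank_lt (by simpa [Module.finrank_pi_fintype] using h)
  obtain ⟨c, hc, hc0⟩ := Submodule.exists_mem_ne_zero_of_ne_bot hker
  refine ⟨c, hc0, fun i => ?_⟩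
  simpa [residues] using congrFun (LinearMap.mem_ker.1 hc) i

theorem exists_ne_zero_smul_eq_of_finrank_eq [FiniteDimensional F K] {U₁ U₂ : Submodule F K}
    (hU : Module.finrank F U₁ = Module.finrank F U₂)
    (h : Module.finrank F U₂ * Module.finrank F (K ⧸ U₂) < Module.finrank F K) :
    ∃ c : K, c ≠ 0 ∧ c • U₁ = U₂ := by
  let b := Module.finBasisOfFinrankEq F U₁ hU
  obtain ⟨c, hc, hmem⟩ := exists_ne_zero_forall_mul_mem U₂ (fun i => (b i : K)) (by simpa using h)
  have hquot : U₂.mkQ ∘ₗ LinearMap.mulLeft F c ∘ₗ U₁.subtype = 0 :=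
    b.ext fun i => by simpa using hmem i
  have hle : c • U₁ ≤ U₂ := by
    rintro _ ⟨u, hu, rfl⟩
    simpa using congr($hquot ⟨u, hu⟩)
  have hfinrank : Module.finrank F U₁ = Module.finrank F ↥(c • U₁) :=
    (Submodule.equivMapOfInjective (DistribSMul.toLinearMap F K c) (smul_right_injective K hc)
      U₁).finrank_eq
  exact ⟨c, hc, Submodule.eq_of_le_of_finrank_eq hle (hfinrank.symm.trans hU)⟩

end FieldExtension

section ExtensionOfScalars

open scoped Pointwise TensorProduct

variable {F K n : Type*} [Field F] [Field K] [Algebra F K]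

theorem algebraMap_comp_ne_zero_iff {v : n → F} : algebraMap F K ∘ v ≠ 0 ↔ v ≠ 0 := by
  simp [funext_iff]

theorem exists_smul_eq_iff_exists_smul_algebraMap_comp_eq [Finite n] {x y : n → F} (hx : x ≠ 0) :
    (∃ c : F, c • x = y) ↔ ∃ a : K, a • (algebraMap F K ∘ x) = algebraMap F K ∘ y := by
  have hli := linearIndependent_algebraMap_comp_iff (S := K) (v := ![x, y])
  have hpair : (fun i => algebraMap F K ∘ ![x, y] i) =
      ![algebraMap F K ∘ x, algebraMap F K ∘ y] := by
    ext i
    fin_cases i <;> rfl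
  rw [hpair, LinearIndependent.pair_iff' hx,
    LinearIndependent.pair_iff' (algebraMap_comp_ne_zero_iff.2 hx)] at hli
  simpa using (not_congr hli).symm

variable (F) in
/-- The restriction to `Fⁿ` of a linear form on `Kⁿ`, as an `F`-linear map to `K`. -/
def restrictForm (χ : (n → K) →ₗ[K] K) : (n → F) →ₗ[F] K :=
  χ.restrictScalars F ∘ₗ Pi.algebraMap n F K

theorem range_restrictForm_smul (c : K) (χ : (n → K) →ₗ[K] K) :
    LinearMap.range (restrictForm F (c • χ)) = c • LinearMap.range (restrictForm F χ) :=
  LinearMap.range_comp (restrictForm F χ) (DistribSMul.toLinearMap F K c)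

theorem restrictForm_injective [Finite n] :
    Function.Injective (restrictForm F : ((n → K) →ₗ[K] K) → (n → F) →ₗ[F] K) := by
  classical
  intro χ χ' h
  ext i
  have hi : Pi.algebraMap n F K (Pi.single i 1) = Pi.single i 1 := by
    ext j
    simp [Pi.algebraMap, Pi.single_apply, apply_ite]
  simpa [restrictForm, hi] using LinearMap.congr_fun h (Pi.single i 1)

variable [Fintype n] [DecidableEq n]

variable (K) in
/-- The extension to `Kⁿ` of an `F`-linear automorphism of `Fⁿ`, given by the same matrix: it is
the base change to `K` read through `K ⊗ Fⁿ ≃ Kⁿ`. -/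
noncomputable def extendScalars (g : (n → F) ≃ₗ[F] (n → F)) : (n → K) ≃ₗ[K] (n → K) :=
  (TensorProduct.piScalarRight F K K n).symm ≪≫ₗ g.baseChange F K _ _ ≪≫ₗ
    TensorProduct.piScalarRight F K K n

theorem extendScalars_algebraMap_comp (g : (n → F) ≃ₗ[F] (n → F)) (v : n → F) :
    extendScalars K g (algebraMap F K ∘ v) = algebraMap F K ∘ g v := by
  have hv : (TensorProduct.piScalarRight F K K n).symm (algebraMap F K ∘ v) = 1 ⊗ₜ[F] v :=
    TensorProduct.piScalarRight_symm_algebraMap F K n v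
  ext i
  simp [extendScalars, hv, Algebra.smul_def]

theorem restrictForm_comp_extendScalars (χ : (n → K) →ₗ[K] K) (g : (n → F) ≃ₗ[F] (n → F)) :
    restrictForm F (χ ∘ₗ extendScalars K g) = restrictForm F χ ∘ₗ g.toLinearMap :=
  LinearMap.ext fun v => congrArg χ (extendScalars_algebraMap_comp g v)

theorem exists_comp_extendScalars_eq_smul [FiniteDimensional F K] {χ₁ χ₂ : (n → K) →ₗ[K] K}
    (hrange : Module.finrank F (LinearMap.range (restrictForm F χ₁)) =
      Module.finrank F (LinearMap.range (restrictForm F χ₂)))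
    (hlt : Module.finrank F (LinearMap.range (restrictForm F χ₂)) *
      Module.finrank F (K ⧸ LinearMap.range (restrictForm F χ₂)) < Module.finrank F K) :
    ∃ (g : (n → F) ≃ₗ[F] (n → F)) (c : K), c ≠ 0 ∧ χ₂ ∘ₗ extendScalars K g = c • χ₁ := by
  obtain ⟨c, hc, hcU⟩ := exists_ne_zero_smul_eq_of_finrank_eq hrange hlt
  obtain ⟨g, hg⟩ :=
    exists_linearEquiv_comp_eq_of_range_eq ((range_restrictForm_smul c χ₁).trans hcU)
  exact ⟨g, c, hc, restrictForm_injective ((restrictForm_comp_extendScalars χ₂ g).trans hg)⟩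

end ExtensionOfScalars

section ProjectivePlane

variable {F K : Type*} [Field F] [Field K] [Algebra F K]

theorem hmap_mk (f : (Fin 3 → K) ≃ₗ[K] (Fin 3 → K)) {v : Fin 3 → K} (hv : v ≠ 0) :
    hmap f (mk K v hv) = mk K (f v) (f.map_ne_zero_iff.2 hv) := rfl

theorem hmap_trans (f g : (Fin 3 → K) ≃ₗ[K] (Fin 3 → K)) :
    hmap (f ≪≫ₗ g) = hmap g ∘ hmap f :=
  Projectivization.map_comp _ f.injective _ g.injective

theorem hmap_symm_comp_self (f : (Fin 3 → K) ≃ₗ[K] (Fin 3 → K)) : hmap f.symm ∘ hmap f = id := by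
  rw [← hmap_trans, LinearEquiv.self_trans_symm]
  exact Projectivization.map_id

theorem hmap_bijective (f : (Fin 3 → K) ≃ₗ[K] (Fin 3 → K)) : Function.Bijective (hmap f) :=
  Function.bijective_iff_has_inverse.2 ⟨hmap f.symm,
    congrFun (hmap_symm_comp_self f), congrFun (hmap_symm_comp_self f.symm)⟩

theorem mk_mem_linf {v : Fin 3 → K} (hv : v ≠ 0) : mk K v hv ∈ linf K ↔ v 2 = 0 := by
  obtain ⟨a, ha⟩ := exists_smul_eq_mk_rep K v hv
  change (mk K v hv).rep 2 = 0 ↔ v 2 = 0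
  simp [← ha, Units.smul_def]

theorem hmap_image_linf_of_apply_two_eq_mul {f : (Fin 3 → K) ≃ₗ[K] (Fin 3 → K)} {c : K}
    (hc : c ≠ 0) (hf : ∀ v, f v 2 = c * v 2) : hmap f '' linf K = linf K := by
  have hpre : hmap f ⁻¹' linf K = linf K := by
    ext P
    induction P using Projectivization.ind with
    | h v hv => rw [Set.mem_preimage, hmap_mk, mk_mem_linf, mk_mem_linf, hf]; simp [hc]
  conv_lhs => rw [← hpre]
  exact Set.image_preimage_eq _ (hmap_bijective f).surjective

theorem mem_basePlane_iff {P : PGPoint K} :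
    P ∈ basePlane F K ↔
      ∃ (v : Fin 3 → F) (hv : algebraMap F K ∘ v ≠ 0), mk K (algebraMap F K ∘ v) hv = P := by
  constructor
  · rintro ⟨v, hv, rfl, hvF⟩
    choose w hw using hvF
    obtain rfl : algebraMap F K ∘ w = v := funext hw
    exact ⟨w, hv, rfl⟩
  · rintro ⟨v, hv, rfl⟩
    exact ⟨_, hv, rfl, fun i => ⟨v i, rfl⟩⟩

theorem hmap_extendScalars_image_basePlane (g : (Fin 3 → F) ≃ₗ[F] (Fin 3 → F)) :
    hmap (extendScalars K g) '' basePlane F K = basePlane F K := by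
  ext P
  simp only [Set.mem_image, mem_basePlane_iff]
  constructor
  · rintro ⟨_, ⟨v, hv, rfl⟩, rfl⟩
    refine ⟨g v, by simpa [algebraMap_comp_ne_zero_iff] using hv, ?_⟩
    simp only [hmap_mk, extendScalars_algebraMap_comp]
  · rintro ⟨v, hv, rfl⟩
    have hv' : algebraMap F K ∘ g.symm v ≠ 0 := by simpa [algebraMap_comp_ne_zero_iff] using hv
    refine ⟨mk K _ hv', ⟨_, hv', rfl⟩, ?_⟩
    simp only [hmap_mk, extendScalars_algebraMap_comp, LinearEquiv.apply_symm_apply]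

variable (F) in
/-- The equation of `ℓ∞` in the coordinates of the subplane `hmap f '' basePlane F K`, restricted
to `F³`: the points of the subplane on `ℓ∞` are those with coordinate vectors in its kernel. -/
def linfForm (f : (Fin 3 → K) ≃ₗ[K] (Fin 3 → K)) : (Fin 3 → F) →ₗ[F] K :=
  restrictForm F (LinearMap.proj 2 ∘ₗ f.toLinearMap)

theorem hmap_mk_algebraMap_comp_mem_linf {f : (Fin 3 → K) ≃ₗ[K] (Fin 3 → K)} {v : Fin 3 → F}
    (hv : algebraMap F K ∘ v ≠ 0) :
    hmap f (mk K (algebraMap F K ∘ v) hv) ∈ linf K ↔ v ∈ LinearMap.ker (linfForm F f) := by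
  rw [hmap_mk, mk_mem_linf]
  rfl

theorem finrank_ker_linfForm {f : (Fin 3 → K) ≃ₗ[K] (Fin 3 → K)} {T : PGPoint K}
    (hT : hmap f '' basePlane F K ∩ linf K = {T}) :
    Module.finrank F (LinearMap.ker (linfForm F f)) = 1 := by
  obtain ⟨⟨P, hP, rfl⟩, hlinf⟩ : T ∈ hmap f '' basePlane F K ∩ linf K := hT ▸ rfl
  obtain ⟨v, hv, rfl⟩ := mem_basePlane_iff.1 hP
  have hv0 : v ≠ 0 := algebraMap_comp_ne_zero_iff.1 hv
  have hker : v ∈ LinearMap.ker (linfForm F f) := (hmap_mk_algebraMap_comp_mem_linf hv).1 hlinf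
  refine (finrank_eq_one_iff_of_nonzero' (⟨v, hker⟩ : LinearMap.ker (linfForm F f))
    (by simpa using hv0)).2 fun ⟨w, hw⟩ => ?_
  suffices ∃ c : F, c • v = w by simpa using this
  rcases eq_or_ne w 0 with rfl | hw0
  · exact ⟨0, zero_smul F v⟩
  have hw' : algebraMap F K ∘ w ≠ 0 := algebraMap_comp_ne_zero_iff.2 hw0
  have hmem : hmap f (mk K _ hw') ∈ hmap f '' basePlane F K ∩ linf K :=
    ⟨Set.mem_image_of_mem _ (mem_basePlane_iff.2 ⟨w, hw', rfl⟩),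
      (hmap_mk_algebraMap_comp_mem_linf hw').2 hw⟩
  rw [hT, Set.mem_singleton_iff] at hmem
  exact (exists_smul_eq_iff_exists_smul_algebraMap_comp_eq hv0).2
    ((mk_eq_mk_iff' K _ _ hw' hv).1 ((hmap_bijective f).injective hmem))

theorem finrank_range_linfForm {f : (Fin 3 → K) ≃ₗ[K] (Fin 3 → K)} {T : PGPoint K}
    (hT : hmap f '' basePlane F K ∩ linf K = {T}) :
    Module.finrank F (LinearMap.range (linfForm F f)) = 2 := by
  have h := (linfForm F f).finrank_range_add_finrank_ker
  rw [finrank_ker_linfForm hT, Module.finrank_fin_fun] at h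
  omega

theorem statement4_general [FiniteDimensional F K] (hFK : Module.finrank F K ≤ 3)
    {π₁ π₂ : Set (PGPoint K)} (h₁ : IsSubplane F π₁) (h₂ : IsSubplane F π₂)
    (ht₁ : ∃ T : PGPoint K, π₁ ∩ linf K = {T}) (ht₂ : ∃ T : PGPoint K, π₂ ∩ linf K = {T}) :
    ∃ f : (Fin 3 → K) ≃ₗ[K] (Fin 3 → K), hmap f '' linf K = linf K ∧ hmap f '' π₁ = π₂ := by
  obtain ⟨f₁, rfl⟩ := h₁
  obtain ⟨f₂, rfl⟩ := h₂
  obtain ⟨T₁, hT₁⟩ := ht₁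
  obtain ⟨T₂, hT₂⟩ := ht₂
  have hr₁ := finrank_range_linfForm hT₁
  have hr₂ := finrank_range_linfForm hT₂
  have hlt : Module.finrank F (LinearMap.range (linfForm F f₂)) *
      Module.finrank F (K ⧸ LinearMap.range (linfForm F f₂)) < Module.finrank F K := by
    have hcodim := (LinearMap.range (linfForm F f₂)).finrank_quotient_add_finrank
    rw [hr₂] at hcodim ⊢
    omega
  obtain ⟨g, c, hc, hg⟩ := exists_comp_extendScalars_eq_smul (hr₁.trans hr₂.symm) hlt
  refine ⟨f₁.symm ≪≫ₗ extendScalars K g ≪≫ₗ f₂,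
    hmap_image_linf_of_apply_two_eq_mul hc fun v => ?_, ?_⟩
  · simpa using congr($hg (f₁.symm v))
  · rw [hmap_trans, hmap_trans, Set.image_comp, Set.image_comp, ← Set.image_comp (hmap f₁.symm),
      hmap_symm_comp_self, Set.image_id, hmap_extendScalars_image_basePlane]

end ProjectivePlane

/-- the subgroup of `PGL(3,q³)` stabilising `ℓ∞` is transitive on the
order-`q`-subplanes meeting `ℓ∞` in exactly one point. -/
theorem statement4 (q : ℕ) (F K : Type) [Field F] [Field K] [Fintype F] [Fintype K]
    [Algebra F K] (hF : Fintype.card F = q) (hK : Fintype.card K = q ^ 3)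
    (π₁ π₂ : Set (PGPoint K))
    (h₁ : IsSubplane F π₁) (h₂ : IsSubplane F π₂)
    (ht₁ : ∃ T : PGPoint K, π₁ ∩ linf K = {T})
    (ht₂ : ∃ T : PGPoint K, π₂ ∩ linf K = {T}) :
    ∃ f : (Fin 3 → K) ≃ₗ[K] (Fin 3 → K),
      hmap f '' linf K = linf K ∧ hmap f '' π₁ = π₂ := by
  subst hF
  exact statement4_general (finrank_eq_of_card_eq_pow hK).le h₁ h₂ ht₁ ht₂

end TangentSplashPaper
end
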